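/- Let G be a group of automorphisms of a rooted tree T, let K be a normal subgroup of G, let k ∈ K and let u be a vertex of T with u·k ≠ u. Then the derived subgroup rist_G(u)' of the rigid stabilizer of u is contained in K. -/

import Mathlib

/-!  Common definitions: rooted trees of type `(m n)`, tree automorphisms,
rigid stabilizers, branch groups, and auxiliary notions. -/

universe u

/-- Vertices of the rooted tree of type `m`: finite sequences `(x_0, …, x_{n-1})`
with `x_i ∈ {1, …, m i}` (encoded as `Fin (m i)`). -/
def Vertex (m : ℕ → ℕ) : Type := Σ n : ℕ, ∀ i : Fin n, Fin (m i)

namespace Vertex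

variable {m : ℕ → ℕ}

/-- The level of a vertex: its length. -/
def level (v : Vertex m) : ℕ := v.1

/-- `v` is a (weak) prefix of `w`; i.e. `w` lies in the subtree `T_v`
(`w = v` or `w` is a descendant of `v`). -/
def IsPrefix (v w : Vertex m) : Prop :=
  ∃ h : v.1 ≤ w.1, ∀ i : Fin v.1, w.2 (Fin.castLE h i) = v.2 i

/-- `w` is a child (one-step extension) of `v`. -/
def IsChild (v w : Vertex m) : Prop := w.1 = v.1 + 1 ∧ IsPrefix v w

end Vertex

/-- The `n`-th layer `L_n` of the tree: all vertices of level `n`. -/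
def layer (m : ℕ → ℕ) (n : ℕ) : Set (Vertex m) := {v | v.1 = n}

section Rist

variable {m : ℕ → ℕ} (G : Type*) [Group G] [MulAction G (Vertex m)]

/-- The rigid stabilizer of a vertex `v`: all elements fixing every vertex
outside the subtree `T_v`. -/
def rist (v : Vertex m) : Subgroup G :=
  ⨅ w ∈ {w : Vertex m | ¬ Vertex.IsPrefix v w}, MulAction.stabilizer G w

/-- The subgroup generated by the rigid stabilizers of the vertices in `X`. -/
def ristSet (X : Set (Vertex m)) : Subgroup G := ⨆ v ∈ X, rist G v

/-- `rist_G(n)`, the rigid stabilizer of the `n`-th layer. -/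
def ristLayer (m : ℕ → ℕ) (G : Type*) [Group G] [MulAction G (Vertex m)] (n : ℕ) :
    Subgroup G :=
  ristSet G (layer m n)

/-- The orbit of the vertex `v` under a subgroup `H ≤ G`. -/
def subOrbit (H : Subgroup G) (v : Vertex m) : Set (Vertex m) :=
  {w | ∃ h ∈ H, h • v = w}

/-- The set of orbits of a subgroup `H ≤ G` on a set `X` of vertices. -/
def orbitsOn (H : Subgroup G) (X : Set (Vertex m)) : Set (Set (Vertex m)) :=
  (fun v => subOrbit G H v) '' X

end Rist

/-- `G` is a branch group on the rooted tree of type `m` (with respect to the given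
action): the action is faithful and by tree automorphisms, `G` acts transitively on
each layer, and each `rist_G(n)` has finite index in `G`. -/
structure IsBranchGroup (m : ℕ → ℕ) (G : Type*) [Group G] [MulAction G (Vertex m)] :
    Prop where
  faithful : ∀ g : G, (∀ v : Vertex m, g • v = v) → g = 1
  aut : ∀ (g : G) (v w : Vertex m), Vertex.IsChild v w ↔ Vertex.IsChild (g • v) (g • w)
  trans : ∀ v w : Vertex m, v.1 = w.1 → ∃ g : G, g • v = w
  ristFiniteIndex : ∀ n : ℕ, (ristLayer m G n).FiniteIndex

/-- A group is virtually soluble if it has a soluble subgroup of finite index. -/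
def VirtuallySolvable (Γ : Type*) [Group Γ] : Prop :=
  ∃ S : Subgroup Γ, S.FiniteIndex ∧ IsSolvable ↥S

/-- A group is virtually abelian if it has an abelian subgroup of finite index. -/
def VirtuallyAbelian (Γ : Type*) [Group Γ] : Prop :=
  ∃ S : Subgroup Γ, S.FiniteIndex ∧ ∀ a ∈ S, ∀ b ∈ S, a * b = b * a

/-- For subgroups `A ≤ B` of a group with `A` normalised by `B`, this says that the
factor `B/A` belongs to the class `𝔛`. -/
def FactorIn (𝔛 : (Γ : Type u) → [inst : Group Γ] → Prop) {G : Type u} [Group G]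
    (A B : Subgroup G) : Prop :=
  ∃ hn : (A.subgroupOf B).Normal, letI := hn; 𝔛 (↥B ⧸ A.subgroupOf B)

/-- The factor `B/A` is virtually soluble. -/
def FactorVirtuallySolvable {G : Type*} [Group G] (A B : Subgroup G) : Prop :=
  ∃ hn : (A.subgroupOf B).Normal,
    letI := hn; VirtuallySolvable (↥B ⧸ A.subgroupOf B)

/-- The factor `B/A` is virtually abelian. -/
def FactorVirtuallyAbelian {G : Type*} [Group G] (A B : Subgroup G) : Prop :=
  ∃ hn : (A.subgroupOf B).Normal,
    letI := hn; VirtuallyAbelian (↥B ⧸ A.subgroupOf B)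

/-- `Γ` has `r` infinite normal subgroups that generate their direct product in `Γ`:
each of them intersects trivially the subgroup generated by the others. -/
def HasIndepFamily (Γ : Type*) [Group Γ] (r : ℕ) : Prop :=
  ∃ N : Fin r → Subgroup Γ, (∀ i, (N i).Normal) ∧ (∀ i, Infinite ↥(N i)) ∧
    ∀ i, N i ⊓ (⨆ j ∈ ({i}ᶜ : Set (Fin r)), N j) = ⊥

theorem Vertex.exists_parent {m : ℕ → ℕ} (w : Vertex m) (n : ℕ) (h : w.1 = n + 1) :
    ∃ p : Vertex m, p.1 = n ∧ Vertex.IsChild p w ∧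
      ∀ v : Vertex m, v.1 ≤ n → Vertex.IsPrefix v w → Vertex.IsPrefix v p := by
  obtain ⟨l, f⟩ := w
  dsimp only at h
  subst h
  refine ⟨⟨n, fun i => f (Fin.castLE (Nat.le_succ n) i)⟩, rfl,
    ⟨rfl, Nat.le_succ n, fun i => rfl⟩, ?_⟩
  rintro v hv ⟨h1, h2⟩
  exact ⟨hv, fun i => h2 i⟩

theorem Vertex.prefix_eq {m : ℕ → ℕ} {v w : Vertex m} (h : v.1 = w.1)
    (hp : Vertex.IsPrefix v w) : v = w := by
  obtain ⟨l, f⟩ := w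
  obtain ⟨l', f'⟩ := v
  dsimp only at h
  subst h
  obtain ⟨h1, h2⟩ := hp
  have : f = f' := funext fun i => h2 i
  rw [this]

theorem Vertex.prefix_refl {m : ℕ → ℕ} (v : Vertex m) : Vertex.IsPrefix v v :=
  ⟨le_rfl, fun _ => rfl⟩

theorem Vertex.prefix_trans {m : ℕ → ℕ} {u v w : Vertex m}
    (h : Vertex.IsPrefix u v) (h' : Vertex.IsPrefix v w) : Vertex.IsPrefix u w := by
  obtain ⟨h1, h2⟩ := h
  obtain ⟨h3, h4⟩ := h'
  exact ⟨h1.trans h3, fun i => (h4 (Fin.castLE h1 i)).trans (h2 i)⟩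

theorem Vertex.prefix_unique {m : ℕ → ℕ} {u v w : Vertex m} (h : u.1 = v.1)
    (hu : Vertex.IsPrefix u w) (hv : Vertex.IsPrefix v w) : u = v := by
  obtain ⟨l, f⟩ := u
  obtain ⟨l', f'⟩ := v
  dsimp only at h
  subst h
  obtain ⟨h1, h2⟩ := hu
  obtain ⟨h3, h4⟩ := hv
  have : f = f' := funext fun i => (h2 i).symm.trans (h4 i)
  rw [this]

section
variable {m : ℕ → ℕ} {G : Type*} [Group G] [MulAction G (Vertex m)]

theorem Vertex.level_smul (haut : ∀ (g : G) (v w : Vertex m),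
      Vertex.IsChild v w ↔ Vertex.IsChild (g • v) (g • w)) (g : G) (n : ℕ) :
    ∀ v : Vertex m, v.1 = n → (g • v).1 = n := by
  induction n with
  | zero =>
    intro v hv
    by_contra hne
    obtain ⟨l, hl⟩ := Nat.exists_eq_succ_of_ne_zero hne
    obtain ⟨p, -, hp, -⟩ := Vertex.exists_parent (g • v) l hl
    rw [haut g⁻¹, inv_smul_smul] at hp
    have := hp.1
    omega
  | succ n ih =>
    intro v hv
    obtain ⟨p, hp, hc, -⟩ := Vertex.exists_parent v n hv
    rw [haut g] at hc
    rw [hc.1, ih p hp]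

theorem Vertex.prefix_smul (haut : ∀ (g : G) (v w : Vertex m),
      Vertex.IsChild v w ↔ Vertex.IsChild (g • v) (g • w)) (g : G) (v : Vertex m) (d : ℕ) :
    ∀ w : Vertex m, w.1 = v.1 + d → Vertex.IsPrefix v w → Vertex.IsPrefix (g • v) (g • w) := by
  induction d with
  | zero =>
    intro w hw hp
    rw [Vertex.prefix_eq hw.symm hp]
    exact Vertex.prefix_refl _
  | succ d ih =>
    intro w hw hp
    obtain ⟨p, hp1, hc, hq⟩ := Vertex.exists_parent w (v.1 + d) hw
    exact Vertex.prefix_trans (ih p hp1 (hq v (Nat.le_add_right _ _) hp)) ((haut g _ _).1 hc).2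

theorem mem_rist_iff' {v : Vertex m} {g : G} :
    g ∈ rist G v ↔ ∀ w, ¬ Vertex.IsPrefix v w → g • w = w := by
  simp [rist, Subgroup.mem_iInf, MulAction.mem_stabilizer_iff]

theorem rist_prefix {v w : Vertex m} {g : G} (hg : g ∈ rist G v) (h : Vertex.IsPrefix v w) :
    Vertex.IsPrefix v (g • w) := by
  by_contra hn
  have := smul_left_cancel g (mem_rist_iff'.1 hg _ hn)
  rw [this] at hn
  exact hn h

end

/-- **Lemma.** Let `G` be a group of automorphisms of a rooted tree `T`, `K ⊴ G`,
`k ∈ K` and `u` a vertex with `u·k ≠ u`.  Then `rist_G(u)' ≤ K`. -/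
theorem rist_derived_le_of_moved_vertex
    (m : ℕ → ℕ) (hm : ∀ n, 2 ≤ m n)
    (G : Type*) [Group G] [MulAction G (Vertex m)]
    (hfaith : ∀ g : G, (∀ v : Vertex m, g • v = v) → g = 1)
    (haut : ∀ (g : G) (v w : Vertex m),
      Vertex.IsChild v w ↔ Vertex.IsChild (g • v) (g • w))
    (K : Subgroup G) [K.Normal] (k : G) (hk : k ∈ K)
    (u : Vertex m) (hu : k • u ≠ u) :
    ⁅rist G u, rist G u⁆ ≤ K := by
  have hlev : (k • u).1 = u.1 := Vertex.level_smul haut k _ u rfl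
  rw [Subgroup.commutator_le]
  intro x hx y hy
  have hz : k * y * k⁻¹ ∈ rist G (k • u) := by
    rw [mem_rist_iff']
    intro w hw
    have : ¬ Vertex.IsPrefix u (k⁻¹ • w) := by
      intro hp
      apply hw
      obtain ⟨d, hd⟩ := Nat.exists_eq_add_of_le hp.1
      have := Vertex.prefix_smul haut k u d _ hd hp
      rwa [smul_inv_smul] at this
    rw [mul_smul, mul_smul, mem_rist_iff'.1 hy _ this, smul_inv_smul]
  have hc : k * y⁻¹ * k⁻¹ * y ∈ K := by
    have h1 := ‹K.Normal›.conj_mem _ (K.inv_mem hk) y⁻¹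
    rw [inv_inv] at h1
    have := K.mul_mem hk h1
    simpa [mul_assoc] using this
  have hzc : y = (k * y * k⁻¹) * (k * y⁻¹ * k⁻¹ * y) := by group
  generalize k * y * k⁻¹ = z at hz hzc
  generalize k * y⁻¹ * k⁻¹ * y = c at hc hzc
  have hcomm : x * z = z * x := by
    rw [← inv_mul_eq_one]
    apply hfaith
    intro w
    rw [mul_smul, inv_smul_eq_iff, mul_smul, mul_smul]
    by_cases h1 : Vertex.IsPrefix u w
    · have key : ∀ w', Vertex.IsPrefix u w' → z • w' = w' := fun w' h =>
        mem_rist_iff'.1 hz _ fun h' => hu (Vertex.prefix_unique hlev h' h)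
      rw [key w h1, key _ (rist_prefix hx h1)]
    · rw [mem_rist_iff'.1 hx w h1]
      by_cases h2 : Vertex.IsPrefix (k • u) w
      · exact (mem_rist_iff'.1 hx _ fun h' =>
          hu (Vertex.prefix_unique hlev (rist_prefix hz h2) h')).symm
      · rw [mem_rist_iff'.1 hz w h2, mem_rist_iff'.1 hx w h1]
  have e : x * y * x⁻¹ * y⁻¹ = z * (x * c * x⁻¹ * c⁻¹) * z⁻¹ := by
    rw [hzc, ← mul_assoc x z c, hcomm]
    group
  change x * y * x⁻¹ * y⁻¹ ∈ K
  rw [e]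
  exact ‹K.Normal›.conj_mem _ (K.mul_mem (‹K.Normal›.conj_mem _ hc x) (K.inv_mem hc)) z
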